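/- Let p be a complex polynomial, Ω ⊆ D(ζ₀, r) open and bounded, ζ₀ ≠ 0 a non-isolated boundary point of Ω, Γ = ∂Ω ∩ D(ζ₀, r), and S holomorphic on Ω, continuous and bounded on Ω ∪ Γ, with S(ζ) = conj(ζ)·p(ζ) for all ζ ∈ Γ. Define f(z) = S(z)/p(z) for z ∈ (Ω ∪ Γ) \ {ζ₀} and f(ζ₀) = conj(ζ₀). Then for sufficiently small r' > 0, f is a Schwarz function of Ω ∪ Γ on D(ζ₀, r'), i.e., f is holomorphic on Ω ∩ D(ζ₀, r'), continuous on (Ω ∪ Γ) ∩ D(ζ₀, r'), and f(ζ) = conj(ζ) for all ζ ∈ Γ ∩ D(ζ₀, r'). -/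

import Mathlib

open Complex Metric Set

local notation "conj'" => starRingEnd ℂ

/-!
Let `v` be `S/p - z̄` on `Ω` and `0` elsewhere. Off its zeros `v` is a holomorphic function minus
`z̄`, so `∂v/∂z̄ = -1` there. Testing with `z̄`-derivatives cut off near the zeros of `v` gives a
Caccioppoli bound for the energy of `v`, which shows that the zero set, however irregular, does not
contribute to the distribution `∂v/∂z̄ = -1_{v ≠ 0}` (as in Radó's theorem). Hence `v` minus a
multiple of the Cauchy transform of the bounded function `1_{v ≠ 0}` is holomorphic in a punctured
disk about `ζ₀`; there it is `O(1/p)`, so it has at most a pole at `ζ₀`. That Cauchy transform is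
continuous and the zeros of `v` accumulate at `ζ₀`, which excludes a pole and forces `v → 0`, that
is, `S/p → conj ζ₀`.
-/

open Filter MeasureTheory Topology

/-- The Wirtinger derivative `∂f/∂z̄`, read off from the real derivative of `f`. -/
noncomputable def dbar (f : ℂ → ℂ) (z : ℂ) : ℂ :=
  (fderiv ℝ f z 1 + I * fderiv ℝ f z I) / 2

/-- `f` is real differentiable at `z` with Wirtinger derivative `∂f/∂z̄ = b`. -/
def HasDbarAt (f : ℂ → ℂ) (b z : ℂ) : Prop :=
  DifferentiableAt ℝ f z ∧ dbar f z = b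

namespace HasDbarAt

variable {f g : ℂ → ℂ} {b c z : ℂ}

theorem of_hasFDerivAt {f' : ℂ →L[ℝ] ℂ} (hf : HasFDerivAt f f' z)
    (hb : f' 1 + I * f' I = 2 * b) : HasDbarAt f b z :=
  ⟨hf.differentiableAt, by rw [dbar, hf.fderiv, hb]; ring⟩

theorem fderiv_one_add (hf : HasDbarAt f b z) :
    fderiv ℝ f z 1 + I * fderiv ℝ f z I = 2 * b := by
  rw [← hf.2, dbar]; ring

theorem sub (hf : HasDbarAt f b z) (hg : HasDbarAt g c z) :
    HasDbarAt (fun t => f t - g t) (b - c) z :=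
  of_hasFDerivAt (hf.1.hasFDerivAt.sub hg.1.hasFDerivAt) <| by
    simp only [_root_.sub_apply]
    linear_combination hf.fderiv_one_add - hg.fderiv_one_add

theorem mul (hf : HasDbarAt f b z) (hg : HasDbarAt g c z) :
    HasDbarAt (fun t => f t * g t) (b * g z + f z * c) z :=
  of_hasFDerivAt (hf.1.hasFDerivAt.mul hg.1.hasFDerivAt) <| by
    simp only [_root_.add_apply, _root_.smul_apply, smul_eq_mul]
    linear_combination f z * hg.fderiv_one_add + g z * hf.fderiv_one_add

theorem of_hasDerivAt {f' : ℂ} (hf : HasDerivAt f f' z) : HasDbarAt f 0 z :=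
  of_hasFDerivAt (hf.hasFDerivAt.restrictScalars ℝ) <| by
    simp only [ContinuousLinearMap.coe_restrictScalars',
      ContinuousLinearMap.toSpanSingleton_apply, smul_eq_mul]
    linear_combination f' * I_mul_I

theorem conj_of_hasDerivAt {f' : ℂ} (hf : HasDerivAt f f' z) :
    HasDbarAt (fun t => conj' (f t)) (conj' f') z :=
  of_hasFDerivAt (conjCLE.toContinuousLinearMap.hasFDerivAt.comp z
    (hf.hasFDerivAt.restrictScalars ℝ)) <| by
    simp only [ContinuousLinearMap.comp_apply, ContinuousLinearMap.coe_restrictScalars',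
      ContinuousLinearMap.toSpanSingleton_apply, smul_eq_mul, one_mul,
      ContinuousLinearEquiv.coe_coe, ContinuousAlgEquiv.coeCLE_apply, conjCAE_apply, map_mul,
      conj_I, neg_mul, mul_neg]
    linear_combination - conj' f' * I_mul_I

theorem ofReal_comp {u : ℂ → ℝ} {h : ℝ → ℝ} {h' : ℝ}
    (hu : HasDbarAt (fun t => (u t : ℂ)) b z) (hh : HasDerivAt h h' (u z)) :
    HasDbarAt (fun t => (h (u t) : ℂ)) (h' * b) z := by
  have hu' : DifferentiableAt ℝ u z := by
    exact reCLM.differentiableAt.comp z hu.1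
  have hf : fderiv ℝ (fun t => (u t : ℂ)) z = ofRealCLM.comp (fderiv ℝ u z) :=
    (ofRealCLM.hasFDerivAt.comp z hu'.hasFDerivAt).fderiv
  refine of_hasFDerivAt (ofRealCLM.hasFDerivAt.comp z
    (hh.comp_hasFDerivAt z hu'.hasFDerivAt)) ?_
  have := hu.fderiv_one_add
  rw [hf] at this
  simp only [ContinuousLinearMap.comp_apply, ofRealCLM_apply, ContinuousLinearMap.comp_smulₛₗ,
    Real.ringHom_apply, smul_apply, real_smul] at this ⊢
  linear_combination h' * this

end HasDbarAt

section TestFunctions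

variable {f : ℂ → ℂ} {z : ℂ}

theorem continuous_dbar (hf : ContDiff ℝ 1 f) : Continuous (dbar f) := by
  have := hf.continuous_fderiv one_ne_zero
  unfold dbar; fun_prop

theorem dbar_eq_zero_of_notMem_tsupport (hz : z ∉ tsupport f) : dbar f z = 0 := by
  simp [dbar, fderiv_of_notMem_tsupport ℝ hz]

theorem tsupport_dbar_subset (f : ℂ → ℂ) : tsupport (dbar f) ⊆ tsupport f :=
  closure_minimal (fun _ => not_imp_comm.1 dbar_eq_zero_of_notMem_tsupport) (isClosed_tsupport f)

theorem hasCompactSupport_dbar (hf : HasCompactSupport f) : HasCompactSupport (dbar f) :=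
  HasCompactSupport.intro hf fun _ => dbar_eq_zero_of_notMem_tsupport

theorem integrable_dbar (hf : ContDiff ℝ 1 f) (hfc : HasCompactSupport f) :
    Integrable (dbar f) :=
  (continuous_dbar hf).integrable_of_hasCompactSupport (hasCompactSupport_dbar hfc)

theorem integral_dbar_eq_zero (hf : ContDiff ℝ 1 f) (hfc : HasCompactSupport f) :
    ∫ z, dbar f z = 0 := by
  have hint (w : ℂ) : Integrable fun z => fderiv ℝ f z w :=
    ((hf.continuous_fderiv one_ne_zero).clm_apply
      continuous_const).integrable_of_hasCompactSupport (hfc.fderiv_apply ℝ w)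
  have hzero (w : ℂ) : ∫ z, fderiv ℝ f z w = 0 := by
    simpa using integral_mul_fderiv_eq_neg_fderiv_mul_of_integrable (μ := volume)
      (f := fun _ => (1 : ℂ)) (g := f) (v := w) (by simp) (by simpa using hint w)
      (by simpa using hf.continuous.integrable_of_hasCompactSupport hfc) (by simp)
      (fun x _ => hf.differentiable one_ne_zero x)
  simp only [dbar, integral_div]
  rw [integral_add (hint 1) ((hint I).const_mul I), integral_const_mul, hzero, hzero]
  simp

theorem exists_contDiff_eventuallyEq_one {U : Set ℂ} (hU : U ∈ 𝓝 z) :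
    ∃ η : ℂ → ℂ, ContDiff ℝ 1 η ∧ HasCompactSupport η ∧ tsupport η ⊆ U ∧ (∀ t, ‖η t‖ ≤ 1) ∧
      η =ᶠ[𝓝 z] 1 := by
  obtain ⟨R, hR, hRU⟩ := Metric.nhds_basis_closedBall.mem_iff.1 hU
  set bump : ContDiffBump z := ⟨R / 2, R, half_pos hR, half_lt_self hR⟩
  have htsupport : tsupport (fun t => (bump t : ℂ)) ⊆ closedBall z R :=
    bump.tsupport_eq ▸ closure_mono fun t ht => by simpa using ht
  refine ⟨fun t => (bump t : ℂ), ofRealCLM.contDiff.comp bump.contDiff,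
    bump.hasCompactSupport.comp_left (g := ofReal) ofReal_zero, htsupport.trans hRU,
    fun t => ?_, ?_⟩
  · simp [abs_of_nonneg bump.nonneg, bump.le_one]
  · filter_upwards [bump.eventuallyEq_one] with t ht
    simp [ht]

end TestFunctions

/-- A `C¹` step from `0` on `(-∞, 1]` to `1` on `[2, ∞)`. -/
noncomputable def cutoff (x : ℝ) : ℝ := Real.smoothTransition (x - 1)

section Cutoff

variable {x : ℝ}

theorem contDiff_cutoff : ContDiff ℝ 1 cutoff :=
  Real.smoothTransition.contDiff.comp (contDiff_id.sub contDiff_const)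

theorem cutoff_of_le_one (hx : x ≤ 1) : cutoff x = 0 :=
  Real.smoothTransition.zero_of_nonpos (by linarith)

theorem cutoff_of_two_le (hx : 2 ≤ x) : cutoff x = 1 :=
  Real.smoothTransition.one_of_one_le (by linarith)

theorem cutoff_nonneg (x : ℝ) : 0 ≤ cutoff x := Real.smoothTransition.nonneg _

theorem cutoff_le_one (x : ℝ) : cutoff x ≤ 1 := Real.smoothTransition.le_one _

theorem monotone_cutoff : Monotone cutoff := fun _ _ h =>
  Real.smoothTransition.monotone (by linarith)

theorem deriv_cutoff_of_le_one (hx : x ≤ 1) : deriv cutoff x = 0 :=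
  IsLocalMin.deriv_eq_zero <| .of_forall fun y => by
    rw [cutoff_of_le_one hx]; exact cutoff_nonneg y

theorem deriv_cutoff_of_two_le (hx : 2 ≤ x) : deriv cutoff x = 0 :=
  IsLocalMax.deriv_eq_zero <| .of_forall fun y => by
    rw [cutoff_of_two_le hx]; exact cutoff_le_one y

theorem mul_deriv_cutoff_nonneg (x : ℝ) : 0 ≤ x * deriv cutoff x := by
  rcases le_total x 1 with hx | hx
  · simp [deriv_cutoff_of_le_one hx]
  · exact mul_nonneg (by linarith) monotone_cutoff.deriv_nonneg

theorem deriv_cutoff_div_mul_nonneg (x δ : ℝ) : 0 ≤ deriv cutoff (x / δ) / δ * x := by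
  convert mul_deriv_cutoff_nonneg (x / δ) using 1; ring

theorem exists_mul_deriv_cutoff_le : ∃ C, ∀ x, x * deriv cutoff x ≤ C := by
  have hsupp : HasCompactSupport fun x => x * deriv cutoff x :=
    .intro (isCompact_Icc (a := 1) (b := 2)) fun x hx => by
      rcases not_and_or.1 hx with hx | hx
      · simp [deriv_cutoff_of_le_one (not_le.1 hx).le]
      · simp [deriv_cutoff_of_two_le (not_le.1 hx).le]
  obtain ⟨C, hC⟩ := (continuous_id.mul
    (contDiff_cutoff.continuous_deriv le_rfl)).bounded_above_of_compact_support hsupp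
  exact ⟨C, fun x => (le_abs_self _).trans (hC x)⟩

theorem eventually_lt_normSq {a : ℂ} (ha : a ≠ 0) :
    ∀ᶠ δ : ℝ in 𝓝[>] 0, 2 * δ < normSq a := by
  have : Tendsto (fun δ : ℝ => 2 * δ) (𝓝 0) (𝓝 0) := by
    simpa using (continuous_const_mul (2 : ℝ)).tendsto 0
  exact (this.mono_left nhdsWithin_le_nhds).eventually_lt_const (normSq_pos.2 ha)

end Cutoff

/-- Off its zeros, `v` is on `U` a holomorphic function minus `z̄`. From a Schwarz function `f` of
`Ω` one gets such a `v` by extending `f - z̄` by zero outside `Ω`: the zero set of `v` then contains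
the boundary of `Ω`, and nothing but continuity is known there. -/
structure IsSchwarzDefect (U : Set ℂ) (v : ℂ → ℂ) : Prop where
  isOpen : IsOpen U
  continuousOn : ContinuousOn v U
  differentiableOn : DifferentiableOn ℂ (fun z => v z + conj' z) (U ∩ v.support)

/-- The derivative of the holomorphic function `v + z̄` attached to a Schwarz defect `v`. -/
noncomputable def defectSlope (v : ℂ → ℂ) : ℂ → ℂ := deriv fun z => v z + conj' z

/-- A cutoff vanishing near the zeros of `v` and tending to `1` away from them as `δ → 0`. -/
noncomputable def zeroCutoff (v : ℂ → ℂ) (δ : ℝ) (z : ℂ) : ℂ := cutoff (normSq (v z) / δ)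

namespace IsSchwarzDefect

variable {U : Set ℂ} {v : ℂ → ℂ} {z : ℂ}

theorem isOpen_inter_support (h : IsSchwarzDefect U v) : IsOpen (U ∩ v.support) :=
  h.continuousOn.isOpen_inter_preimage h.isOpen isOpen_compl_singleton

theorem hasDerivAt (h : IsSchwarzDefect U v) (hz : z ∈ U ∩ v.support) :
    HasDerivAt (fun z => v z + conj' z) (defectSlope v z) z :=
  (h.differentiableOn.differentiableAt (h.isOpen_inter_support.mem_nhds hz)).hasDerivAt

theorem hasDbarAt (h : IsSchwarzDefect U v) (hz : z ∈ U ∩ v.support) : HasDbarAt v (-1) z := by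
  simpa using (HasDbarAt.of_hasDerivAt (h.hasDerivAt hz)).sub
    (HasDbarAt.conj_of_hasDerivAt (hasDerivAt_id z))

theorem hasDbarAt_conj (h : IsSchwarzDefect U v) (hz : z ∈ U ∩ v.support) :
    HasDbarAt (fun t => conj' (v t)) (conj' (defectSlope v z)) z := by
  simpa using (HasDbarAt.conj_of_hasDerivAt (h.hasDerivAt hz)).sub
    (HasDbarAt.of_hasDerivAt (hasDerivAt_id z))

theorem hasDbarAt_normSq (h : IsSchwarzDefect U v) (hz : z ∈ U ∩ v.support) :
    HasDbarAt (fun t => (normSq (v t) : ℂ)) (v z * conj' (defectSlope v z) - conj' (v z)) z := by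
  convert (h.hasDbarAt hz).mul (h.hasDbarAt_conj hz) using 1
  · simp only [mul_conj]
  · ring

theorem differentiableOn_defectSlope (h : IsSchwarzDefect U v) :
    DifferentiableOn ℂ (defectSlope v) (U ∩ v.support) :=
  h.differentiableOn.deriv h.isOpen_inter_support

theorem contDiffOn (h : IsSchwarzDefect U v) : ContDiffOn ℝ 1 v (U ∩ v.support) := by
  simpa using ((h.differentiableOn.contDiffOn h.isOpen_inter_support).restrict_scalars ℝ).sub
    conjCLE.contDiff.contDiffOn

theorem contDiffOn_defectSlope (h : IsSchwarzDefect U v) :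
    ContDiffOn ℝ 1 (defectSlope v) (U ∩ v.support) :=
  (h.differentiableOn_defectSlope.contDiffOn h.isOpen_inter_support).restrict_scalars ℝ

variable {η G : ℂ → ℂ} {g : ℂ} {δ : ℝ}

theorem mul_zeroCutoff_eventuallyEq_zero (h : IsSchwarzDefect U v) (hηU : tsupport η ⊆ U)
    (hz : z ∉ U ∩ v.support) : (fun t => η t * G t * zeroCutoff v δ t) =ᶠ[𝓝 z] fun _ => 0 := by
  by_cases hzη : z ∈ tsupport η
  · have hvz : v z = 0 := by_contra fun hv => hz ⟨hηU hzη, hv⟩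
    have hcont : ContinuousAt (fun t => normSq (v t) / δ) z :=
      (continuous_normSq.continuousAt.comp
        (h.continuousOn.continuousAt (h.isOpen.mem_nhds (hηU hzη)))).div_const δ
    filter_upwards [hcont.eventually_lt_const (show normSq (v z) / δ < 1 by simp [hvz])] with t ht
    simp [zeroCutoff, cutoff_of_le_one ht.le]
  · filter_upwards [notMem_tsupport_iff_eventuallyEq.1 hzη] with t ht
    simp [ht]

theorem contDiff_mul_zeroCutoff (h : IsSchwarzDefect U v) (hη : ContDiff ℝ 1 η)
    (hηU : tsupport η ⊆ U) (hG : ContDiffOn ℝ 1 G (U ∩ v.support)) :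
    ContDiff ℝ 1 fun t => η t * G t * zeroCutoff v δ t := by
  refine contDiff_iff_contDiffAt.2 fun z => ?_
  by_cases hz : z ∈ U ∩ v.support
  · have hW := h.isOpen_inter_support.mem_nhds hz
    have hv : ContDiffAt ℝ 1 (fun t => normSq (v t)) z := by
      simpa only [normSq_eq_norm_sq] using (h.contDiffOn.contDiffAt hW).norm_sq ℝ
    exact (hη.contDiffAt.mul (hG.contDiffAt hW)).mul
      (ofRealCLM.contDiff.contDiffAt.comp z
        (contDiff_cutoff.contDiffAt.comp z (hv.div_const δ)))
  · exact contDiffAt_const.congr_of_eventuallyEq (h.mul_zeroCutoff_eventuallyEq_zero hηU hz)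

theorem hasDbarAt_mul_zeroCutoff (h : IsSchwarzDefect U v) (hη : ContDiff ℝ 1 η)
    (hz : z ∈ U ∩ v.support) (hG : HasDbarAt G g z) :
    HasDbarAt (fun t => η t * G t * zeroCutoff v δ t)
      ((dbar η z * G z + η z * g) * zeroCutoff v δ z +
        η z * G z * ((deriv cutoff (normSq (v z) / δ) / δ : ℝ) *
          (v z * conj' (defectSlope v z) - conj' (v z)))) z := by
  have hη' : HasDbarAt η (dbar η z) z := ⟨hη.differentiable one_ne_zero z, rfl⟩
  have hcutoff : HasDerivAt (fun x => cutoff (x / δ))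
      (deriv cutoff (normSq (v z) / δ) / δ) (normSq (v z)) := by
    have := (contDiff_cutoff.differentiable one_ne_zero _).hasDerivAt.comp (normSq (v z))
        ((hasDerivAt_id _).div_const δ)
    rwa [mul_one_div] at this
  exact (hη'.mul hG).mul ((h.hasDbarAt_normSq hz).ofReal_comp hcutoff)

theorem setIntegral_dbar_mul_zeroCutoff (h : IsSchwarzDefect U v)
    (hη : ContDiff ℝ 1 η) (hηc : HasCompactSupport η) (hηU : tsupport η ⊆ U)
    (hG : ContDiffOn ℝ 1 G (U ∩ v.support)) :
    ∫ z in U ∩ v.support, dbar (fun t => η t * G t * zeroCutoff v δ t) z = 0 := by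
  rw [setIntegral_eq_integral_of_forall_compl_eq_zero fun z hz => by
      simp [dbar, (h.mul_zeroCutoff_eventuallyEq_zero hηU hz).fderiv_eq]]
  exact integral_dbar_eq_zero (h.contDiff_mul_zeroCutoff hη hηU hG) hηc.mul_right.mul_right

end IsSchwarzDefect

/-- The pointwise Caccioppoli inequality: `d` is the derivative of the test function `|e|²`, and the
terms carrying `k` come from differentiating the cutoff. -/
theorem caccioppoli_pointwise {e s v d : ℂ} {h k M B E C : ℝ} (hh : 0 ≤ h) (hh1 : h ≤ 1)
    (hk : 0 ≤ k * normSq v) (hkC : k * normSq v ≤ C) (hd : ‖d‖ ≤ M * ‖e‖) (hv : ‖v‖ ≤ B)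
    (he : ‖e‖ ≤ E) :
    (‖e‖ * ‖s‖) ^ 2 * h ≤
      2 * ((d * (conj' v * s) + e * conj' e * (conj' s * s)) * h +
        e * conj' e * (conj' v * s) * (k * (v * conj' s - conj' v))).re +
      (M ^ 2 * B ^ 2 + C * E ^ 2 / 2) := by
  set y := ‖e‖ * ‖s‖ with hy
  set K := k * normSq v with hK
  have hsplit : (d * (conj' v * s) + e * conj' e * (conj' s * s)) * h +
      e * conj' e * (conj' v * s) * (k * (v * conj' s - conj' v)) =
      ((y ^ 2 * h + K * y ^ 2 : ℝ) : ℂ) +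
        (d * (conj' v * s) * h - e * conj' e * (k * conj' v ^ 2 * s)) := by
    have hee : (‖e‖ : ℂ) ^ 2 = e * conj' e := (mul_conj' e).symm
    have hss : (‖s‖ : ℂ) ^ 2 = s * conj' s := (mul_conj' s).symm
    push_cast [hy, hK]
    rw [mul_pow, hee, hss, ← mul_conj]
    ring
  have hfirst : ‖d * (conj' v * s) * h‖ ≤ M * B * y * h := by
    simp only [norm_mul, norm_conj, norm_real, Real.norm_eq_abs, abs_of_nonneg hh]
    calc ‖d‖ * (‖v‖ * ‖s‖) * h ≤ M * ‖e‖ * (B * ‖s‖) * h := by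
          have := (norm_nonneg d).trans hd; gcongr
      _ = M * B * y * h := by rw [hy]; ring
  have hsecond : ‖e * conj' e * (k * conj' v ^ 2 * s)‖ = K * ‖e‖ * y := by
    have : |k| * ‖v‖ ^ 2 = K := by
      rw [← abs_of_nonneg hk, hK, abs_mul, normSq_eq_norm_sq, abs_of_nonneg (sq_nonneg ‖v‖)]
    simp only [norm_mul, norm_conj, norm_real, norm_pow, Real.norm_eq_abs, this, hy]
    ring
  have hre := (abs_le.1 (abs_re_le_norm
    (d * (conj' v * s) * h - e * conj' e * (k * conj' v ^ 2 * s)))).1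
  have hnorm := norm_sub_le (d * (conj' v * s) * h) (e * conj' e * (k * conj' v ^ 2 * s))
  have hKE : K * ‖e‖ ^ 2 ≤ C * E ^ 2 := by gcongr; exact hk.trans hkC
  rw [hsplit, add_re, ofReal_re]
  have hsq1 := mul_nonneg hh (sq_nonneg (y - M * B))
  have hsq2 := mul_nonneg hk (sq_nonneg (y - ‖e‖ / 2))
  have hMB : M ^ 2 * B ^ 2 * h ≤ M ^ 2 * B ^ 2 := mul_le_of_le_one_right (by positivity) hh1
  linarith

namespace IsSchwarzDefect

variable {U : Set ℂ} {v η ψ : ℂ → ℂ} {δ : ℝ} {z : ℂ}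

theorem exists_norm_mul_defectSlope_sq_le (h : IsSchwarzDefect U v) (hη : ContDiff ℝ 1 η)
    (hηc : HasCompactSupport η) (hηU : tsupport η ⊆ U) :
    ∃ A : ℝ, ∀ δ, ∀ z ∈ U ∩ v.support,
      (‖η z‖ * ‖defectSlope v z‖) ^ 2 * cutoff (normSq (v z) / δ) ≤
        2 * (dbar (fun t => η t * conj' (η t) * (conj' (v t) * defectSlope v t) *
          zeroCutoff v δ t) z).re + (tsupport η).indicator (fun _ => A) z := by
  have hηconj : ContDiff ℝ 1 fun t => conj' (η t) := conjCLE.contDiff.comp hη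
  obtain ⟨M₁, hM₁⟩ := (continuous_dbar hη).bounded_above_of_compact_support
    (hasCompactSupport_dbar hηc)
  obtain ⟨M₂, hM₂⟩ := (continuous_dbar hηconj).bounded_above_of_compact_support
    (hasCompactSupport_dbar (hηc.comp_left (g := conj') (map_zero _)))
  obtain ⟨E, hE⟩ := hη.continuous.bounded_above_of_compact_support hηc
  obtain ⟨B, hB⟩ := hηc.isCompact.exists_bound_of_continuousOn (h.continuousOn.mono hηU)
  obtain ⟨C, hC⟩ := exists_mul_deriv_cutoff_le
  refine ⟨(M₁ + M₂) ^ 2 * B ^ 2 + C * E ^ 2 / 2, fun δ z hz => ?_⟩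
  have hηz : HasDbarAt η (dbar η z) z := ⟨hη.differentiable one_ne_zero z, rfl⟩
  have hηconjz : HasDbarAt (fun t => conj' (η t)) (dbar (fun t => conj' (η t)) z) z :=
    ⟨hηconj.differentiable one_ne_zero z, rfl⟩
  have hG := (h.hasDbarAt_conj hz).mul (HasDbarAt.of_hasDerivAt
    (h.differentiableOn_defectSlope.differentiableAt
      (h.isOpen_inter_support.mem_nhds hz)).hasDerivAt)
  rw [(h.hasDbarAt_mul_zeroCutoff (hη.mul hηconj) hz hG).2, (hηz.mul hηconjz).2, mul_zero, add_zero]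
  by_cases hzη : z ∈ tsupport η
  · rw [indicator_of_mem hzη]
    refine caccioppoli_pointwise (cutoff_nonneg _) (cutoff_le_one _)
      (deriv_cutoff_div_mul_nonneg _ _) ?_ ?_ (hB z hzη) (hE z)
    · convert hC (normSq (v z) / δ) using 1; ring
    · refine (norm_add_le _ _).trans ?_
      rw [norm_mul, norm_mul, norm_conj, add_mul, mul_comm ‖η z‖]
      gcongr
      exacts [hM₁ z, hM₂ z]
  · simp [image_eq_zero_of_notMem_tsupport hzη, hzη]

theorem exists_lintegral_norm_mul_defectSlope_sq_le (h : IsSchwarzDefect U v)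
    (hη : ContDiff ℝ 1 η) (hηc : HasCompactSupport η) (hηU : tsupport η ⊆ U) :
    ∃ A : ℝ, ∀ δ, ∫⁻ z in U ∩ v.support, ENNReal.ofReal
      ((‖η z‖ * ‖defectSlope v z‖) ^ 2 * cutoff (normSq (v z) / δ)) ≤ ENNReal.ofReal A := by
  obtain ⟨A, hle⟩ := h.exists_norm_mul_defectSlope_sq_le hη hηc hηU
  refine ⟨∫ z in U ∩ v.support, (tsupport η).indicator (fun _ => A) z, fun δ => ?_⟩
  have hW : MeasurableSet (U ∩ v.support) := h.isOpen_inter_support.measurableSet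
  have hηη : ContDiff ℝ 1 fun t => η t * conj' (η t) := hη.mul (conjCLE.contDiff.comp hη)
  have hηηU : tsupport (fun t => η t * conj' (η t)) ⊆ U :=
    (tsupport_mul_subset_left (f := η)).trans hηU
  have hG : ContDiffOn ℝ 1 (fun t => conj' (v t) * defectSlope v t) (U ∩ v.support) :=
    (conjCLE.contDiff.comp_contDiffOn h.contDiffOn).mul h.contDiffOn_defectSlope
  set b : ℂ → ℂ := dbar fun t =>
    η t * conj' (η t) * (conj' (v t) * defectSlope v t) * zeroCutoff v δ t
  have hb : IntegrableOn b (U ∩ v.support) :=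
    (integrable_dbar (h.contDiff_mul_zeroCutoff hηη hηηU hG)
      hηc.mul_right.mul_right.mul_right).integrableOn
  have hbre : ∫ z in U ∩ v.support, (b z).re = 0 := by
    rw [← RCLike.re_eq_complex_re, integral_re hb,
      h.setIntegral_dbar_mul_zeroCutoff hηη hηc.mul_right hηηU hG, map_zero]
  have hind : IntegrableOn ((tsupport η).indicator fun _ => A) (U ∩ v.support) :=
    ((integrable_indicator_iff (isClosed_tsupport η).measurableSet).2
      (integrableOn_const hηc.isCompact.measure_lt_top.ne)).integrableOn
  have hb2 : IntegrableOn (fun z => 2 * (b z).re) (U ∩ v.support) := hb.re.const_mul 2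
  calc ∫⁻ z in U ∩ v.support, ENNReal.ofReal
        ((‖η z‖ * ‖defectSlope v z‖) ^ 2 * cutoff (normSq (v z) / δ))
      ≤ ∫⁻ z in U ∩ v.support,
          ENNReal.ofReal (2 * (b z).re + (tsupport η).indicator (fun _ => A) z) :=
        setLIntegral_mono' hW fun z hz => ENNReal.ofReal_le_ofReal (hle δ z hz)
    _ = ENNReal.ofReal (∫ z in U ∩ v.support,
          (2 * (b z).re + (tsupport η).indicator (fun _ => A) z)) :=
        (ofReal_integral_eq_lintegral_ofReal (hb2.add hind) <| by
          filter_upwards [ae_restrict_mem hW] with z hz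
          exact (mul_nonneg (sq_nonneg _) (cutoff_nonneg _)).trans (hle δ z hz)).symm
    _ = _ := by rw [integral_add hb2 hind, integral_const_mul, hbre, mul_zero, zero_add]

theorem integrableOn_norm_mul_defectSlope_sq (h : IsSchwarzDefect U v) (hη : ContDiff ℝ 1 η)
    (hηc : HasCompactSupport η) (hηU : tsupport η ⊆ U) :
    IntegrableOn (fun t => (‖η t‖ * ‖defectSlope v t‖) ^ 2) (U ∩ v.support) := by
  obtain ⟨A, hA⟩ := h.exists_lintegral_norm_mul_defectSlope_sq_le hη hηc hηU
  have hW : MeasurableSet (U ∩ v.support) := h.isOpen_inter_support.measurableSet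
  have hv : ContinuousOn v (U ∩ v.support) := h.continuousOn.mono inter_subset_left
  have hcover : AECover (volume.restrict (U ∩ v.support)) (𝓝[>] (0 : ℝ))
      fun δ => (U ∩ v.support) ∩ (fun z => normSq (v z)) ⁻¹' Ioi (2 * δ) := by
    refine ⟨?_, fun δ => ?_⟩
    · filter_upwards [ae_restrict_mem hW] with z hz
      filter_upwards [eventually_lt_normSq hz.2] with δ hδ using ⟨hz, hδ⟩
    · exact ((continuous_normSq.comp_continuousOn hv).isOpen_inter_preimage
        h.isOpen_inter_support isOpen_Ioi).measurableSet
  have hcont : ContinuousOn (fun t => (‖η t‖ * ‖defectSlope v t‖) ^ 2) (U ∩ v.support) :=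
    (hη.continuous.continuousOn.norm.mul h.contDiffOn_defectSlope.continuousOn.norm).pow 2
  refine hcover.integrable_of_lintegral_enorm_bounded A (hcont.aestronglyMeasurable hW) ?_
  filter_upwards [self_mem_nhdsWithin] with δ hδ
  rw [Measure.restrict_restrict_of_subset inter_subset_left]
  refine (setLIntegral_mono' (hcover.measurableSet δ) fun z hz => ?_).trans
    ((lintegral_mono_set inter_subset_left).trans (hA δ))
  rw [cutoff_of_two_le ((le_div_iff₀ hδ).2 (le_of_lt hz.2)), mul_one,
    Real.enorm_eq_ofReal (sq_nonneg _)]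

theorem continuous_mul (h : IsSchwarzDefect U v) (hη : Continuous η) (hηU : tsupport η ⊆ U) :
    Continuous fun t => η t * v t :=
  continuous_of_tsupport fun _ ht => hη.continuousAt.mul (h.continuousOn.continuousAt
    (h.isOpen.mem_nhds (hηU (tsupport_mul_subset_left ht))))

theorem continuous_dbar_mul (h : IsSchwarzDefect U v) (hψ : ContDiff ℝ 1 ψ)
    (hψU : tsupport ψ ⊆ U) : Continuous fun t => dbar ψ t * v t :=
  h.continuous_mul (continuous_dbar hψ) ((tsupport_dbar_subset ψ).trans hψU)

theorem integrable_dbar_mul (h : IsSchwarzDefect U v) (hψ : ContDiff ℝ 1 ψ)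
    (hψc : HasCompactSupport ψ) (hψU : tsupport ψ ⊆ U) : Integrable fun t => dbar ψ t * v t :=
  (h.continuous_dbar_mul hψ hψU).integrable_of_hasCompactSupport
    (hasCompactSupport_dbar hψc).mul_right

theorem integrableOn_norm_mul_defectSlope (h : IsSchwarzDefect U v) (hη : ContDiff ℝ 1 η)
    (hηc : HasCompactSupport η) (hηU : tsupport η ⊆ U) :
    IntegrableOn (fun t => ‖η t‖ * ‖defectSlope v t‖) (U ∩ v.support) := by
  have hW : MeasurableSet (U ∩ v.support) := h.isOpen_inter_support.measurableSet
  have hone : IntegrableOn ((tsupport η).indicator fun _ => (1 : ℝ)) (U ∩ v.support) :=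
    ((integrable_indicator_iff (isClosed_tsupport η).measurableSet).2
      (integrableOn_const hηc.isCompact.measure_lt_top.ne)).integrableOn
  refine (hone.add (h.integrableOn_norm_mul_defectSlope_sq hη hηc hηU)).mono'
    ((hη.continuous.continuousOn.norm.mul
      h.contDiffOn_defectSlope.continuousOn.norm).aestronglyMeasurable hW) (.of_forall fun z => ?_)
  by_cases hz : z ∈ tsupport η
  · rw [Real.norm_of_nonneg (by positivity), Pi.add_apply, indicator_of_mem hz]
    nlinarith [sq_nonneg (‖η z‖ * ‖defectSlope v z‖ - 1)]
  · simp [image_eq_zero_of_notMem_tsupport hz, hz]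

theorem dbar_mul_self_zeroCutoff (h : IsSchwarzDefect U v) (hψ : ContDiff ℝ 1 ψ)
    (hz : z ∈ U ∩ v.support) :
    dbar (fun t => ψ t * v t * zeroCutoff v δ t) z =
      (dbar ψ z * v z - ψ z) * zeroCutoff v δ z + ψ z * v z *
        ((deriv cutoff (normSq (v z) / δ) / δ : ℝ) *
          (v z * conj' (defectSlope v z) - conj' (v z))) := by
  rw [(h.hasDbarAt_mul_zeroCutoff hψ hz (h.hasDbarAt hz)).2]; ring

theorem norm_dbar_mul_self_zeroCutoff_le (h : IsSchwarzDefect U v) (hψ : ContDiff ℝ 1 ψ)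
    (hz : z ∈ U ∩ v.support) {C : ℝ} (hC : ∀ x, x * deriv cutoff x ≤ C) :
    ‖dbar (fun t => ψ t * v t * zeroCutoff v δ t) z‖ ≤
      ‖dbar ψ z * v z - ψ z‖ + C * (‖ψ z‖ * ‖defectSlope v z‖ + ‖ψ z‖) := by
  set k := deriv cutoff (normSq (v z) / δ) / δ
  have hK : 0 ≤ k * normSq (v z) := deriv_cutoff_div_mul_nonneg _ _
  have hKC : k * normSq (v z) ≤ C := by convert hC (normSq (v z) / δ) using 1; ring
  have hbracket : ‖v z * conj' (defectSlope v z) - conj' (v z)‖ ≤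
      ‖v z‖ * (‖defectSlope v z‖ + 1) :=
    (norm_sub_le _ _).trans_eq (by rw [norm_mul, norm_conj, norm_conj]; ring)
  rw [h.dbar_mul_self_zeroCutoff hψ hz]
  refine (norm_add_le _ _).trans (add_le_add ?_ ?_)
  · rw [norm_mul, zeroCutoff, norm_real, Real.norm_of_nonneg (cutoff_nonneg _)]
    exact mul_le_of_le_one_right (norm_nonneg _) (cutoff_le_one _)
  · rw [norm_mul, norm_mul, norm_mul, norm_real, Real.norm_eq_abs]
    calc ‖ψ z‖ * ‖v z‖ * (|k| * ‖v z * conj' (defectSlope v z) - conj' (v z)‖)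
        ≤ ‖ψ z‖ * ‖v z‖ * (|k| * (‖v z‖ * (‖defectSlope v z‖ + 1))) := by gcongr
      _ = |k| * normSq (v z) * (‖ψ z‖ * ‖defectSlope v z‖ + ‖ψ z‖) := by
          rw [normSq_eq_norm_sq]; ring
      _ ≤ C * (‖ψ z‖ * ‖defectSlope v z‖ + ‖ψ z‖) := by
          rw [← abs_of_nonneg (normSq_nonneg (v z)), ← abs_mul, abs_of_nonneg hK]
          gcongr

/-- Off the zeros of `v` this is `∂v/∂z̄ = -1`; the content is that the zero set carries no mass. -/
theorem integral_dbar_mul_eq_setIntegral (h : IsSchwarzDefect U v) (hψ : ContDiff ℝ 1 ψ)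
    (hψc : HasCompactSupport ψ) (hψU : tsupport ψ ⊆ U) :
    ∫ t, dbar ψ t * v t = ∫ t in U ∩ v.support, ψ t := by
  obtain ⟨C, hC⟩ := exists_mul_deriv_cutoff_le
  have hW : MeasurableSet (U ∩ v.support) := h.isOpen_inter_support.measurableSet
  have hψi : Integrable ψ := hψ.continuous.integrable_of_hasCompactSupport hψc
  have hlim : Tendsto (fun δ => ∫ z in U ∩ v.support,
      dbar (fun t => ψ t * v t * zeroCutoff v δ t) z) (𝓝[>] 0)
      (𝓝 (∫ t in U ∩ v.support, (dbar ψ t * v t - ψ t))) := by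
    refine tendsto_integral_filter_of_dominated_convergence
      (fun z => ‖dbar ψ z * v z - ψ z‖ + C * (‖ψ z‖ * ‖defectSlope v z‖ + ‖ψ z‖)) ?_ ?_ ?_ ?_
    · exact .of_forall fun δ => (continuous_dbar (h.contDiff_mul_zeroCutoff hψ hψU
        h.contDiffOn)).aestronglyMeasurable
    · refine .of_forall fun δ => ?_
      filter_upwards [ae_restrict_mem hW] with z hz
        using h.norm_dbar_mul_self_zeroCutoff_le hψ hz hC
    · exact ((h.integrable_dbar_mul hψ hψc hψU).sub hψi).norm.integrableOn.add
        (((h.integrableOn_norm_mul_defectSlope hψ hψc hψU).add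
          hψi.norm.integrableOn).const_mul C)
    · filter_upwards [ae_restrict_mem hW] with z hz
      refine tendsto_const_nhds.congr' ?_
      filter_upwards [eventually_lt_normSq hz.2, self_mem_nhdsWithin] with δ hδ hδ0
      have h2 := (le_div_iff₀ hδ0).2 hδ.le
      rw [h.dbar_mul_self_zeroCutoff hψ hz]
      simp [zeroCutoff, cutoff_of_two_le h2, deriv_cutoff_of_two_le h2]
  have hzero : ∫ t in U ∩ v.support, (dbar ψ t * v t - ψ t) = 0 :=
    tendsto_nhds_unique hlim <| tendsto_const_nhds.congr fun _ =>
      (h.setIntegral_dbar_mul_zeroCutoff hψ hψc hψU h.contDiffOn).symm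
  rw [integral_sub (h.integrable_dbar_mul hψ hψc hψU).integrableOn hψi.integrableOn,
    sub_eq_zero] at hzero
  rw [← hzero, setIntegral_eq_integral_of_forall_compl_eq_zero]
  intro t ht
  by_cases htψ : t ∈ tsupport ψ
  · rw [show v t = 0 from by_contra fun hv => ht ⟨hψU htψ, hv⟩, mul_zero]
  · rw [dbar_eq_zero_of_notMem_tsupport htψ, zero_mul]

end IsSchwarzDefect

section CauchyTransform

variable {g : ℂ → ℂ} {c M : ℝ} {w z : ℂ}

/-- The Cauchy transform of `g`; `-1/π` times it solves `∂u/∂z̄ = g`. The junk value `0⁻¹ = 0` at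
the pole of the integrand is harmless. -/
noncomputable def cauchyTransform (g : ℂ → ℂ) (w : ℂ) : ℂ := ∫ t, g t * (t - w)⁻¹

/-- A smooth regularisation of `t⁻¹`, converging to it as `c → ∞`. -/
noncomputable def cauchyKernel (c : ℝ) (t : ℂ) : ℂ := (c ^ 2 / (1 + c ^ 2 * normSq t) : ℝ) * conj' t

theorem one_add_sq_mul_normSq_pos (c : ℝ) (t : ℂ) : 0 < 1 + c ^ 2 * normSq t := by
  have := normSq_nonneg t; positivity

theorem contDiff_cauchyKernel (c : ℝ) : ContDiff ℝ 1 (cauchyKernel c) := by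
  have hnormSq : ContDiff ℝ 1 normSq := by
    simpa only [← normSq_eq_norm_sq] using contDiff_norm_sq ℝ (E := ℂ)
  exact (ofRealCLM.contDiff.comp (contDiff_const.div (contDiff_const.add
    (contDiff_const.mul hnormSq)) fun t => (one_add_sq_mul_normSq_pos c t).ne')).mul
    conjCLE.contDiff

theorem hasDbarAt_cauchyKernel_sub (c : ℝ) (w z : ℂ) :
    HasDbarAt (fun t => cauchyKernel c (t - w))
      (c ^ 2 / (1 + c ^ 2 * normSq (z - w)) ^ 2 : ℝ) z := by
  have hid : HasDerivAt (fun t => t - w) 1 z := (hasDerivAt_id z).sub_const w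
  have hconj : HasDbarAt (fun t => conj' (t - w)) 1 z := by
    simpa using HasDbarAt.conj_of_hasDerivAt hid
  have hnormSq : HasDbarAt (fun t => (normSq (t - w) : ℂ)) (z - w) z := by
    simpa only [zero_mul, zero_add, mul_one, mul_conj] using (HasDbarAt.of_hasDerivAt hid).mul hconj
  have hpos := one_add_sq_mul_normSq_pos c (z - w)
  have hquot : HasDerivAt (fun x : ℝ => c ^ 2 / (1 + c ^ 2 * x))
      (-(c ^ 4) / (1 + c ^ 2 * normSq (z - w)) ^ 2) (normSq (z - w)) := by
    refine ((hasDerivAt_const (normSq (z - w)) (c ^ 2)).fun_div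
      (((hasDerivAt_id (normSq (z - w))).const_mul (c ^ 2)).const_add 1) hpos.ne').congr_deriv ?_
    simp only [id]
    ring
  unfold cauchyKernel
  convert (hnormSq.ofReal_comp hquot).mul hconj using 1
  rw [mul_assoc, mul_conj, mul_one]
  norm_cast
  field_simp
  ring

theorem norm_cauchyKernel_le (c : ℝ) (t : ℂ) : ‖cauchyKernel c t‖ ≤ |c| := by
  have hpos := one_add_sq_mul_normSq_pos c t
  rw [cauchyKernel, norm_mul, norm_conj, norm_real, Real.norm_of_nonneg (by positivity),
    div_mul_eq_mul_div, div_le_iff₀ hpos, normSq_eq_norm_sq, ← sq_abs c]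
  nlinarith [mul_nonneg (abs_nonneg c) (sq_nonneg (|c| * ‖t‖ - 1)), abs_nonneg c]

theorem inv_sub_cauchyKernel (c : ℝ) (t : ℂ) :
    t⁻¹ - cauchyKernel c t = (t * (1 + c ^ 2 * normSq t))⁻¹ := by
  rcases eq_or_ne t 0 with rfl | ht
  · simp [cauchyKernel]
  have hpos : (1 + c ^ 2 * normSq t : ℂ) ≠ 0 := by
    exact_mod_cast (one_add_sq_mul_normSq_pos c t).ne'
  rw [cauchyKernel]
  push_cast
  field_simp
  rw [← mul_conj]
  ring

theorem norm_inv_sub_cauchyKernel_one (t : ℂ) :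
    ‖t⁻¹ - cauchyKernel 1 t‖ = (‖t‖ * (1 + ‖t‖ ^ 2))⁻¹ := by
  have h : ‖(1 + (‖t‖ : ℂ) ^ 2)‖ = 1 + ‖t‖ ^ 2 := by
    rw [← ofReal_one, ← ofReal_pow, ← ofReal_add, norm_real, Real.norm_of_nonneg (by positivity)]
  rw [inv_sub_cauchyKernel, normSq_eq_norm_sq]
  simp [h]

theorem inv_sub_cauchyKernel_eq_mul (hc : c ≠ 0) (t : ℂ) :
    t⁻¹ - cauchyKernel c t = c * ((c • t)⁻¹ - cauchyKernel 1 (c • t)) := by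
  have hc' : (c : ℂ) ≠ 0 := ofReal_ne_zero.2 hc
  rw [inv_sub_cauchyKernel, inv_sub_cauchyKernel, real_smul, map_mul, normSq_ofReal]
  push_cast
  field_simp

theorem integrable_inv_sub_cauchyKernel_one :
    Integrable fun t : ℂ => t⁻¹ - cauchyKernel 1 t := by
  have hrad : IntegrableOn (fun y : ℝ => y ^ (Module.finrank ℝ ℂ - 1) • (y * (1 + y ^ 2))⁻¹)
      (Ioi 0) := by
    refine integrable_inv_one_add_sq.integrableOn.congr_fun (fun y hy => ?_) measurableSet_Ioi
    have hy : (y : ℝ) ≠ 0 := ne_of_gt hy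
    simp only [finrank_real_complex, Nat.add_one_sub_one, pow_one, smul_eq_mul]
    field_simp
  refine ((integrable_fun_norm_addHaar volume).2 hrad).mono' ?_ (.of_forall fun t =>
    (norm_inv_sub_cauchyKernel_one t).le)
  exact (measurable_inv.sub (contDiff_cauchyKernel 1).continuous.measurable).aestronglyMeasurable

theorem integral_norm_inv_sub_cauchyKernel (hc : 0 < c) :
    ∫ t, ‖t⁻¹ - cauchyKernel c t‖ = c⁻¹ * ∫ t : ℂ, ‖t⁻¹ - cauchyKernel 1 t‖ := by
  simp only [inv_sub_cauchyKernel_eq_mul hc.ne', norm_mul, norm_real, Real.norm_of_nonneg hc.le]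
  rw [integral_const_mul, Measure.integral_comp_smul volume
    (fun t : ℂ => ‖t⁻¹ - cauchyKernel 1 t‖) c]
  simp only [finrank_real_complex, abs_of_pos (inv_pos.2 (pow_pos hc 2)), smul_eq_mul]
  field_simp

theorem integral_div_one_add_sq_sq : ∫ y in Ioi (0 : ℝ), y / (1 + y ^ 2) ^ 2 = 1 / 2 := by
  have hlim : Tendsto (fun y : ℝ => -(1 / 2) * (1 + y ^ 2)⁻¹) atTop (𝓝 0) := by
    simpa using (tendsto_inv_atTop_zero.comp (tendsto_atTop_add_const_left _ 1
      (tendsto_pow_atTop two_ne_zero))).const_mul (-(1 / 2) : ℝ)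
  rw [integral_Ioi_of_hasDerivAt_of_nonneg (g := fun y => -(1 / 2) * (1 + y ^ 2)⁻¹) ?_ ?_ ?_ hlim]
  · norm_num
  · exact Continuous.continuousWithinAt (by fun_prop (disch := intros; positivity))
  · intro y _
    refine (((((hasDerivAt_id' y).fun_pow 2).const_add 1).fun_inv
      (by positivity)).const_mul (-(1 / 2) : ℝ)).congr_deriv ?_
    field_simp
    ring
  · intro y hy
    have := le_of_lt hy.out
    positivity

theorem integral_inv_pi_mul_one_add_norm_sq_sq :
    ∫ t : ℂ, (Real.pi * (1 + ‖t‖ ^ 2) ^ 2)⁻¹ = 1 := by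
  rw [integral_fun_norm_addHaar volume fun y => (Real.pi * (1 + y ^ 2) ^ 2)⁻¹]
  have (y : ℝ) : y ^ (Module.finrank ℝ ℂ - 1) • (Real.pi * (1 + y ^ 2) ^ 2)⁻¹ =
      Real.pi⁻¹ * (y / (1 + y ^ 2) ^ 2) := by
    rw [finrank_real_complex, smul_eq_mul, pow_one]
    field_simp
  simp_rw [this]
  rw [integral_const_mul, integral_div_one_add_sq_sq, finrank_real_complex, Measure.real,
    Complex.volume_ball]
  simp

theorem integrable_mul_cauchyKernel_sub (hg : Integrable g) (c : ℝ) (w : ℂ) :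
    Integrable fun t => g t * cauchyKernel c (t - w) :=
  hg.mul_bdd (c := |c|) ((contDiff_cauchyKernel c).continuous.comp
    (continuous_id.sub continuous_const)).aestronglyMeasurable
    (.of_forall fun _ => norm_cauchyKernel_le c _)

theorem integrable_mul_inv_sub (hg : Integrable g) (hM : ∀ t, ‖g t‖ ≤ M) (w : ℂ) :
    Integrable fun t => g t * (t - w)⁻¹ := by
  have htail : Integrable fun t => g t * ((t - w)⁻¹ - cauchyKernel 1 (t - w)) :=
    (integrable_inv_sub_cauchyKernel_one.comp_sub_right w).bdd_mul (c := M) hg.aestronglyMeasurable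
      (.of_forall hM)
  refine (htail.add (integrable_mul_cauchyKernel_sub hg 1 w)).congr (.of_forall fun t => ?_)
  simp only [Pi.add_apply]
  ring

theorem norm_cauchyTransform_sub_le (hg : Integrable g) (hM : ∀ t, ‖g t‖ ≤ M) (hc : 0 < c)
    (w : ℂ) : ‖cauchyTransform g w - ∫ t, g t * cauchyKernel c (t - w)‖ ≤
      M * (c⁻¹ * ∫ t : ℂ, ‖t⁻¹ - cauchyKernel 1 t‖) := by
  have htail : Integrable fun t : ℂ => t⁻¹ - cauchyKernel c t := by
    simp only [inv_sub_cauchyKernel_eq_mul hc.ne']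
    exact (integrable_inv_sub_cauchyKernel_one.comp_smul hc.ne').const_mul _
  rw [cauchyTransform, ← integral_sub (integrable_mul_inv_sub hg hM w)
    (integrable_mul_cauchyKernel_sub hg c w), ← integral_norm_inv_sub_cauchyKernel hc,
    ← integral_sub_right_eq_self (fun t => ‖t⁻¹ - cauchyKernel c t‖) w, ← integral_const_mul]
  refine norm_integral_le_of_norm_le ((htail.comp_sub_right w).norm.const_mul M)
    (.of_forall fun t => ?_)
  rw [← mul_sub, norm_mul]
  gcongr
  exact hM t

theorem tendstoUniformly_cauchyTransform (hg : Integrable g) (hM : ∀ t, ‖g t‖ ≤ M) :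
    TendstoUniformly (fun c w => ∫ t, g t * cauchyKernel c (t - w)) (cauchyTransform g) atTop := by
  have hlim : Tendsto (fun c : ℝ => M * (c⁻¹ * ∫ t : ℂ, ‖t⁻¹ - cauchyKernel 1 t‖)) atTop (𝓝 0) := by
    simpa using (tendsto_inv_atTop_zero.mul_const _).const_mul M
  refine Metric.tendstoUniformly_iff.2 fun ε hε => ?_
  filter_upwards [hlim.eventually_lt_const hε, eventually_gt_atTop 0] with c hcε hc w
  exact (dist_eq_norm _ _).trans_le (norm_cauchyTransform_sub_le hg hM hc w) |>.trans_lt hcε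

theorem continuous_cauchyTransform (hg : Integrable g) (hM : ∀ t, ‖g t‖ ≤ M) :
    Continuous (cauchyTransform g) := by
  refine (tendstoUniformly_cauchyTransform hg hM).continuous (.of_forall fun c => ?_)
  refine continuous_of_dominated (bound := fun t => ‖g t‖ * |c|)
    (fun w => (integrable_mul_cauchyKernel_sub hg c w).aestronglyMeasurable) (fun w => ?_)
    (hg.norm.mul_const _) (.of_forall fun t => ?_)
  · refine .of_forall fun t => ?_
    rw [norm_mul]
    gcongr
    exact norm_cauchyKernel_le c _
  · exact continuous_const.mul
      ((contDiff_cauchyKernel c).continuous.comp (continuous_const.sub continuous_id))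

theorem continuous_cauchyTransform_indicator_one {s : Set ℂ} (hs : MeasurableSet s)
    (hvol : volume s ≠ ⊤) : Continuous (cauchyTransform (s.indicator 1)) :=
  continuous_cauchyTransform ((integrable_indicator_iff hs).2 (integrableOn_const hvol))
    fun t => (norm_indicator_le_norm_self 1 t).trans_eq norm_one

theorem differentiableAt_cauchyTransform (hg : Integrable g) (hgw : g =ᶠ[𝓝 w] 0) :
    DifferentiableAt ℂ (cauchyTransform g) w := by
  obtain ⟨ρ, hρ, hball⟩ := Metric.eventually_nhds_iff_ball.1 hgw
  have hdist {t x : ℂ} (hx : x ∈ ball w (ρ / 2)) (ht : g t ≠ 0) : ρ / 2 ≤ ‖t - x‖ := by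
    have htw : ρ ≤ dist t w := not_lt.1 fun h => ht (hball t h)
    have := dist_triangle t x w
    rw [mem_ball] at hx
    rw [← dist_eq_norm]
    linarith
  have hmeas (n : ℕ) (x : ℂ) : AEStronglyMeasurable fun t => g t * ((t - x) ^ n)⁻¹ :=
    hg.aestronglyMeasurable.mul (by fun_prop)
  have hbound (n : ℕ) {x : ℂ} (hx : x ∈ ball w (ρ / 2)) (t : ℂ) :
      ‖g t * ((t - x) ^ n)⁻¹‖ ≤ ‖g t‖ * ((ρ / 2) ^ n)⁻¹ := by
    by_cases ht : g t = 0
    · simp [ht]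
    · have := hdist hx ht
      rw [norm_mul, norm_inv, norm_pow]
      gcongr
  refine (hasDerivAt_integral_of_dominated_loc_of_deriv_le
    (F := fun x t => g t * (t - x)⁻¹) (F' := fun x t => g t * ((t - x) ^ 2)⁻¹)
    (bound := fun t => ‖g t‖ * ((ρ / 2) ^ 2)⁻¹) (ball_mem_nhds w (half_pos hρ))
    (.of_forall fun x => by simpa using hmeas 1 x)
    ?_ (hmeas 2 w) (.of_forall fun t x hx => hbound 2 hx t) (hg.norm.mul_const _)
    (.of_forall fun t x hx => ?_)).2.differentiableAt
  · simpa using (hg.norm.mul_const ((ρ / 2) ^ 1)⁻¹).mono' (hmeas 1 w)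
      (.of_forall (hbound 1 (mem_ball_self (half_pos hρ))))
  · by_cases ht : g t = 0
    · simpa [ht] using hasDerivAt_const x (0 : ℂ)
    · have htx : t - x ≠ 0 := norm_pos_iff.1 ((half_pos hρ).trans_le (hdist hx ht))
      refine ((((hasDerivAt_id' x).const_sub t).fun_inv htx).const_mul (g t)).congr_deriv ?_
      simp

theorem cauchyTransform_sub {g₁ g₂ : ℂ → ℂ} {M₁ M₂ : ℝ} (hg₁ : Integrable g₁)
    (hM₁ : ∀ t, ‖g₁ t‖ ≤ M₁) (hg₂ : Integrable g₂) (hM₂ : ∀ t, ‖g₂ t‖ ≤ M₂) (w : ℂ) :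
    cauchyTransform (fun t => g₁ t - g₂ t) w = cauchyTransform g₁ w - cauchyTransform g₂ w := by
  simp only [cauchyTransform, sub_mul]
  exact integral_sub (integrable_mul_inv_sub hg₁ hM₁ w) (integrable_mul_inv_sub hg₂ hM₂ w)

theorem tendsto_norm_sq_mul_inv_pi_mul_one_add_norm_sq_sq :
    Tendsto (fun x : ℂ => ‖x‖ ^ 2 * (Real.pi * (1 + ‖x‖ ^ 2) ^ 2)⁻¹)
      (Bornology.cobounded ℂ) (𝓝 0) := by
  have hlim : Tendsto (fun x : ℂ => (‖x‖ ^ 2)⁻¹) (Bornology.cobounded ℂ) (𝓝 0) :=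
    tendsto_inv_atTop_zero.comp
      ((tendsto_pow_atTop two_ne_zero).comp tendsto_norm_cobounded_atTop)
  refine squeeze_zero (fun x => by positivity) (fun x => ?_) hlim
  rcases eq_or_ne x 0 with rfl | hx
  · simp
  · have := norm_pos_iff.2 hx
    rw [← div_eq_mul_inv, div_le_iff₀ (by positivity), inv_mul_eq_div, le_div_iff₀ (by positivity)]
    nlinarith [Real.pi_gt_three, sq_nonneg ‖x‖]

theorem tendsto_integral_mul_dbar_cauchyKernel (hg : Integrable g) (hgw : ContinuousAt g w) :
    Tendsto (fun c => ∫ t, g t * dbar (fun t => cauchyKernel c (t - w)) t) atTop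
      (𝓝 (Real.pi * g w)) := by
  have hpeak := (tendsto_integral_comp_smul_smul_of_integrable' (μ := volume)
    (fun x : ℂ => by positivity) integral_inv_pi_mul_one_add_norm_sq_sq
      (by simpa only [finrank_real_complex] using
        tendsto_norm_sq_mul_inv_pi_mul_one_add_norm_sq_sq) hg hgw).const_mul
      (Real.pi : ℂ)
  refine hpeak.congr fun c => ?_
  rw [← integral_const_mul]
  refine integral_congr_ae (.of_forall fun t => ?_)
  have hnorm : ‖c • (w - t)‖ ^ 2 = c ^ 2 * normSq (t - w) := by
    rw [norm_smul, mul_pow, ← normSq_eq_norm_sq, ← neg_sub, normSq_neg, Real.norm_eq_abs, sq_abs]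
  have hpos := one_add_sq_mul_normSq_pos c (t - w)
  beta_reduce
  rw [(hasDbarAt_cauchyKernel_sub c w t).2, finrank_real_complex, hnorm, real_smul]
  have : ((1 + c ^ 2 * normSq (t - w) : ℝ) : ℂ) ≠ 0 := ofReal_ne_zero.2 hpos.ne'
  have hpi : (Real.pi : ℂ) ≠ 0 := ofReal_ne_zero.2 Real.pi_ne_zero
  push_cast at this ⊢
  field_simp

end CauchyTransform

namespace IsSchwarzDefect

variable {U : Set ℂ} {v η : ℂ → ℂ} {w : ℂ}

theorem integral_mul_cauchyKernel_add (h : IsSchwarzDefect U v) (hη : ContDiff ℝ 1 η)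
    (hηc : HasCompactSupport η) (hηU : tsupport η ⊆ U) (c : ℝ) (w : ℂ) :
    (∫ t, dbar η t * v t * cauchyKernel c (t - w)) +
        ∫ t, η t * v t * dbar (fun t => cauchyKernel c (t - w)) t =
      ∫ t, (U ∩ v.support).indicator η t * cauchyKernel c (t - w) := by
  have hk : ContDiff ℝ 1 fun t => cauchyKernel c (t - w) :=
    (contDiff_cauchyKernel c).comp (contDiff_id.sub contDiff_const)
  have hint : Integrable fun t => η t * v t * dbar (fun t => cauchyKernel c (t - w)) t :=
    ((h.continuous_mul hη.continuous hηU).mul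
      (continuous_dbar hk)).integrable_of_hasCompactSupport hηc.mul_right.mul_right
  have hdbar (t : ℂ) : dbar (fun t => η t * cauchyKernel c (t - w)) t * v t =
      dbar η t * v t * cauchyKernel c (t - w) +
        η t * v t * dbar (fun t => cauchyKernel c (t - w)) t := by
    have hηt : HasDbarAt η (dbar η t) t := ⟨hη.differentiable one_ne_zero t, rfl⟩
    rw [(hηt.mul (hasDbarAt_cauchyKernel_sub c w t)).2, (hasDbarAt_cauchyKernel_sub c w t).2]
    ring
  rw [← integral_add (integrable_mul_cauchyKernel_sub (h.integrable_dbar_mul hη hηc hηU) c w) hint]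
  simp only [← hdbar]
  rw [h.integral_dbar_mul_eq_setIntegral (hη.mul hk) hηc.mul_right
      ((tsupport_mul_subset_left (f := η)).trans hηU),
    ← integral_indicator h.isOpen_inter_support.measurableSet]
  simp only [indicator_mul_left]

/-- The Cauchy–Pompeiu formula for `η v`, whose `∂/∂z̄` is `v ∂η/∂z̄ - η` off the zeros of `v`. -/
theorem pi_mul_eq_cauchyTransform_sub (h : IsSchwarzDefect U v) (hη : ContDiff ℝ 1 η)
    (hηc : HasCompactSupport η) (hηU : tsupport η ⊆ U) (w : ℂ) :
    Real.pi * (η w * v w) = cauchyTransform ((U ∩ v.support).indicator η) w -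
      cauchyTransform (fun t => dbar η t * v t) w := by
  have hηi : Integrable η := hη.continuous.integrable_of_hasCompactSupport hηc
  obtain ⟨E, hE⟩ := hη.continuous.bounded_above_of_compact_support hηc
  obtain ⟨M, hM⟩ := (h.continuous_dbar_mul hη hηU).bounded_above_of_compact_support
    (hasCompactSupport_dbar hηc).mul_right
  have hηv : Continuous fun t => η t * v t := h.continuous_mul hη.continuous hηU
  have hsource := (tendstoUniformly_cauchyTransform
    (hηi.indicator h.isOpen_inter_support.measurableSet)
    fun t => (norm_indicator_le_norm_self η t).trans (hE t)).tendsto_at w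
  have hcommutator := (tendstoUniformly_cauchyTransform
    (h.integrable_dbar_mul hη hηc hηU) hM).tendsto_at w
  refine tendsto_nhds_unique (tendsto_integral_mul_dbar_cauchyKernel (g := fun t => η t * v t)
    (hηv.integrable_of_hasCompactSupport hηc.mul_right) hηv.continuousAt)
    ((hsource.sub hcommutator).congr fun c => ?_)
  rw [← h.integral_mul_cauchyKernel_add hη hηc hηU, add_sub_cancel_left]

theorem differentiableOn_pi_mul_sub_cauchyTransform (h : IsSchwarzDefect U v)
    (hvol : volume (U ∩ v.support) ≠ ⊤) :
    DifferentiableOn ℂ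
      (fun w => Real.pi * v w - cauchyTransform ((U ∩ v.support).indicator 1) w) U := by
  intro w hw
  refine DifferentiableAt.differentiableWithinAt ?_
  obtain ⟨η, hη, hηc, hηU, hηle, hη1⟩ := exists_contDiff_eventuallyEq_one (h.isOpen.mem_nhds hw)
  set W := U ∩ v.support
  have hW : MeasurableSet W := h.isOpen_inter_support.measurableSet
  have hηi : Integrable (W.indicator η) :=
    (hη.continuous.integrable_of_hasCompactSupport hηc).indicator hW
  have hone : Integrable (W.indicator (1 : ℂ → ℂ)) :=
    (integrable_indicator_iff hW).2 (integrableOn_const hvol)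
  have hWηle (t : ℂ) : ‖W.indicator η t‖ ≤ 1 := (norm_indicator_le_norm_self η t).trans (hηle t)
  have honele (t : ℂ) : ‖W.indicator (1 : ℂ → ℂ) t‖ ≤ 1 :=
    (norm_indicator_le_norm_self 1 t).trans (by simp)
  have hsource : DifferentiableAt ℂ
      (cauchyTransform fun t => W.indicator η t - W.indicator 1 t) w := by
    refine differentiableAt_cauchyTransform (hηi.sub hone) ?_
    filter_upwards [hη1] with t ht
    simp [indicator, ht]
  have hcommutator : DifferentiableAt ℂ (cauchyTransform fun t => dbar η t * v t) w := by
    refine differentiableAt_cauchyTransform (h.integrable_dbar_mul hη hηc hηU) ?_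
    filter_upwards [hη1.eventuallyEq_nhds] with t ht
    simp [dbar, ht.fderiv_eq]
  refine (hsource.sub hcommutator).congr_of_eventuallyEq ?_
  filter_upwards [hη1] with z hz
  have hrep := h.pi_mul_eq_cauchyTransform_sub hη hηc hηU z
  rw [hz, Pi.one_apply, one_mul] at hrep
  rw [Pi.sub_apply, cauchyTransform_sub hηi hWηle hone honele, hrep]
  ring

end IsSchwarzDefect

section IsolatedPoint

variable {f g C : ℂ → ℂ} {a : ℂ}

theorem meromorphicAt_of_isBigO_one {s : Set ℂ} (hs : s ∈ 𝓝[≠] a) (hf : DifferentiableOn ℂ f s)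
    (hbdd : f =O[𝓝[≠] a] (1 : ℂ → ℝ)) : MeromorphicAt f a := by
  have hlittle : (fun z => f z - f a) =o[𝓝[≠] a] fun z => (z - a)⁻¹ :=
    Filter.IsBoundedUnder.isLittleO_sub_self_inv <| (Asymptotics.isBigO_one_iff ℝ).1 <|
      hbdd.sub (Asymptotics.isBigO_const_const _ one_ne_zero _)
  have hext := (differentiableOn_update_limUnder_insert_of_isLittleO hs hf hlittle).analyticAt
    (insert_mem_nhds_iff.2 hs)
  exact hext.meromorphicAt.congr <| eventually_nhdsWithin_of_forall fun z hz =>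
    Function.update_of_ne hz _ _

theorem tendsto_add_zero_of_frequently_eq_zero (hg : MeromorphicAt g a) (hC : ContinuousAt C a)
    (hzero : ∃ᶠ z in 𝓝[≠] a, g z + C z = 0) :
    Tendsto (fun z => g z + C z) (𝓝[≠] a) (𝓝 0) := by
  have hClim : Tendsto C (𝓝[≠] a) (𝓝 (C a)) := hC.tendsto.mono_left nhdsWithin_le_nhds
  have horder : 0 ≤ meromorphicOrderAt g a := by
    by_contra! hneg
    have hpole := (tendsto_norm_cobounded_atTop.comp
      (tendsto_cobounded_of_meromorphicOrderAt_neg hneg)).eventually_gt_atTop (‖C a‖ + 1)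
    have hCbdd := hClim.norm.eventually_lt_const (lt_add_one _)
    obtain ⟨z, hz, hgz, hCz⟩ := (hzero.and_eventually (hpole.and hCbdd)).exists
    rw [Function.comp_apply, eq_neg_of_add_eq_zero_left hz, norm_neg] at hgz
    exact lt_asymm hgz hCz
  obtain ⟨l, hl⟩ := tendsto_nhds_of_meromorphicOrderAt_nonneg hg horder
  have hlim := hl.add hClim
  have hsum : l + C a = 0 := by
    by_contra hne
    obtain ⟨z, hz, hz'⟩ := (hzero.and_eventually (hlim.eventually_ne hne)).exists
    exact hz' hz
  rwa [hsum] at hlim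

end IsolatedPoint

namespace IsSchwarzDefect

variable {U V : Set ℂ} {v p : ℂ → ℂ} {a : ℂ}

theorem mono (h : IsSchwarzDefect U v) (hV : IsOpen V) (hVU : V ⊆ U) : IsSchwarzDefect V v :=
  ⟨hV, h.continuousOn.mono hVU, h.differentiableOn.mono (inter_subset_inter_left _ hVU)⟩

theorem meromorphicAt_pi_mul_sub_cauchyTransform (h : IsSchwarzDefect U v) (hU : U ∈ 𝓝[≠] a)
    (hvol : volume (U ∩ v.support) ≠ ⊤) (hp : AnalyticAt ℂ p a) (hp0 : ∀ᶠ z in 𝓝[≠] a, p z ≠ 0)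
    (hbdd : (fun z => p z * v z) =O[𝓝[≠] a] (1 : ℂ → ℝ)) :
    MeromorphicAt
      (fun w => Real.pi * v w - cauchyTransform ((U ∩ v.support).indicator 1) w) a := by
  set C := cauchyTransform ((U ∩ v.support).indicator 1)
  have hC : Continuous C :=
    continuous_cauchyTransform_indicator_one h.isOpen_inter_support.measurableSet hvol
  have hpC : (fun z => p z * C z) =O[𝓝[≠] a] (1 : ℂ → ℝ) :=
    ((hp.continuousAt.mul hC.continuousAt).isBigO_one ℝ).mono nhdsWithin_le_nhds
  obtain ⟨s, hs, hps⟩ := hp.eventually_analyticAt.exists_mem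
  have hpmer : MeromorphicAt (fun z => p z * (Real.pi * v z - C z)) a := by
    refine meromorphicAt_of_isBigO_one (inter_mem hU (mem_nhdsWithin_of_mem_nhds hs))
      (.mul (fun z hz => (hps z hz.2).differentiableAt.differentiableWithinAt)
        ((h.differentiableOn_pi_mul_sub_cauchyTransform hvol).mono inter_subset_left)) ?_
    refine ((hbdd.const_mul_left Real.pi).sub hpC).congr_left fun z => ?_
    ring
  refine (hpmer.div hp.meromorphicAt).congr ?_
  filter_upwards [hp0] with z hz using mul_div_cancel_left₀ _ hz

theorem tendsto_zero (h : IsSchwarzDefect U v) (hU : U ∈ 𝓝[≠] a) (hp : AnalyticAt ℂ p a)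
    (hp0 : ∀ᶠ z in 𝓝[≠] a, p z ≠ 0) (hbdd : (fun z => p z * v z) =O[𝓝[≠] a] (1 : ℂ → ℝ))
    (hzero : ∃ᶠ z in 𝓝[≠] a, v z = 0) : Tendsto v (𝓝[≠] a) (𝓝 0) := by
  set V := U ∩ ball a 1
  have hV : IsSchwarzDefect V v := h.mono (h.isOpen.inter isOpen_ball) inter_subset_left
  have hVa : V ∈ 𝓝[≠] a := inter_mem hU (mem_nhdsWithin_of_mem_nhds (ball_mem_nhds a one_pos))
  have hvol : volume (V ∩ v.support) ≠ ⊤ :=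
    measure_ne_top_of_subset (inter_subset_left.trans inter_subset_right) measure_ball_lt_top.ne
  have hlim := tendsto_add_zero_of_frequently_eq_zero
    (hV.meromorphicAt_pi_mul_sub_cauchyTransform hVa hvol hp hp0 hbdd)
    (continuous_cauchyTransform_indicator_one hV.isOpen_inter_support.measurableSet
      hvol).continuousAt
    (hzero.mono fun z hz => by simp [hz])
  have hpi : (Real.pi : ℂ) ≠ 0 := ofReal_ne_zero.2 Real.pi_ne_zero
  simpa [hpi] using hlim.const_mul (Real.pi : ℂ)⁻¹

end IsSchwarzDefect

/-- `f` is a Schwarz function of `Ω ∪ Γ` on `D`, where `Γ = ∂Ω ∩ D`; thus `(Ω ∪ Γ) ∩ D` is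
`closure Ω ∩ D`. The set `D` need not be a disk: punctured disks occur. -/
structure IsSchwarzFunction (Ω D : Set ℂ) (f : ℂ → ℂ) : Prop where
  differentiableOn : DifferentiableOn ℂ f (Ω ∩ D)
  continuousOn : ContinuousOn f (closure Ω ∩ D)
  eq_conj : ∀ z ∈ frontier Ω ∩ D, f z = conj' z

namespace IsSchwarzFunction

variable {Ω D : Set ℂ} {f p : ℂ → ℂ} {a z : ℂ}

theorem indicator_sub_conj_eq (h : IsSchwarzFunction Ω D f) (hz : z ∈ closure Ω ∩ D) :
    Ω.indicator (fun z => f z - conj' z) z = f z - conj' z :=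
  indicator_apply_eq_self.2 fun hzΩ => by
    rw [h.eq_conj z ⟨⟨hz.1, fun hint => hzΩ (interior_subset hint)⟩, hz.2⟩, sub_self]

theorem isSchwarzDefect (h : IsSchwarzFunction Ω D f) (hD : IsOpen D) :
    IsSchwarzDefect D (Ω.indicator fun z => f z - conj' z) where
  isOpen := hD
  continuousOn := by
    classical
    rw [← piecewise_eq_indicator]
    exact ContinuousOn.piecewise (fun z hz => sub_eq_zero.2 (h.eq_conj z hz.symm))
      ((inter_comm D _ ▸ h.continuousOn).sub continuous_conj.continuousOn) continuousOn_const
  differentiableOn := by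
    have hsub : D ∩ (Ω.indicator fun z => f z - conj' z).support ⊆ Ω ∩ D := fun z hz =>
      ⟨mem_of_indicator_ne_zero hz.2, hz.1⟩
    refine (h.differentiableOn.mono hsub).congr fun z hz => ?_
    rw [indicator_of_mem (hsub hz).1, sub_add_cancel]

theorem isBigO_mul_indicator_sub_conj (hp : ContinuousAt p a)
    (hbdd : (fun z => p z * f z) =O[𝓝[closure Ω \ {a}] a] (1 : ℂ → ℝ)) :
    (fun z => p z * Ω.indicator (fun z => f z - conj' z) z) =O[𝓝[≠] a] (1 : ℂ → ℝ) := by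
  have hdiff : (fun z => p z * (f z - conj' z)) =O[𝓝[closure Ω \ {a}] a] (1 : ℂ → ℝ) := by
    simp only [mul_sub]
    exact hbdd.sub (((hp.mul continuous_conj.continuousAt).isBigO_one ℝ).mono nhdsWithin_le_nhds)
  obtain ⟨c, hc, hbound⟩ := hdiff.exists_nonneg
  have hboundΩ : ∀ᶠ z in 𝓝[≠] a, z ∈ Ω → ‖p z * (f z - conj' z)‖ ≤ c * ‖(1 : ℂ → ℝ) z‖ :=
    eventually_nhdsWithin_iff.2 <| (eventually_nhdsWithin_iff.1 hbound.bound).mono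
      fun z hz hza hzΩ => hz ⟨subset_closure hzΩ, hza⟩
  refine Asymptotics.IsBigO.of_bound c (hboundΩ.mono fun z hz => ?_)
  by_cases hzΩ : z ∈ Ω
  · rw [indicator_of_mem hzΩ]
    exact hz hzΩ
  · simpa [indicator_of_notMem hzΩ] using hc

theorem tendsto_conj (h : IsSchwarzFunction Ω (D \ {a}) f) (hD : IsOpen D) (ha : a ∈ D)
    (hp : AnalyticAt ℂ p a) (hp0 : ∀ᶠ z in 𝓝[≠] a, p z ≠ 0)
    (hbdd : (fun z => p z * f z) =O[𝓝[closure Ω \ {a}] a] (1 : ℂ → ℝ))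
    (hacc : AccPt a (𝓟 (frontier Ω))) : Tendsto f (𝓝[closure Ω \ {a}] a) (𝓝 (conj' a)) := by
  set v := Ω.indicator fun z => f z - conj' z
  have hv {z : ℂ} (hz : z ∈ closure Ω ∩ (D \ {a})) : v z = f z - conj' z :=
    h.indicator_sub_conj_eq hz
  have hDa : D \ {a} ∈ 𝓝[≠] a := sdiff_mem_nhdsWithin_compl (hD.mem_nhds ha) _
  have hle : 𝓝[closure Ω \ {a}] a ≤ 𝓝[≠] a := nhdsWithin_mono _ fun z hz => hz.2
  have hzero : ∃ᶠ z in 𝓝[≠] a, v z = 0 :=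
    ((accPt_iff_frequently_nhdsNE.1 hacc).and_eventually hDa).mono fun z hz => by
      rw [hv ⟨frontier_subset_closure hz.1, hz.2⟩, h.eq_conj z hz, sub_self]
  have hlim : Tendsto (fun z => v z + conj' z) (𝓝[closure Ω \ {a}] a) (𝓝 (conj' a)) := by
    simpa using (((h.isSchwarzDefect (hD.sdiff isClosed_singleton)).tendsto_zero hDa hp hp0
      (isBigO_mul_indicator_sub_conj hp.continuousAt hbdd) hzero).mono_left hle).add
      (continuous_conj.continuousAt.mono_left nhdsWithin_le_nhds)
  refine hlim.congr' ?_
  filter_upwards [hle hDa, self_mem_nhdsWithin] with z hzD hz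
  rw [hv ⟨hz.1, hzD⟩, sub_add_cancel]

theorem update (h : IsSchwarzFunction Ω (D \ {a}) f) (hΩ : IsOpen Ω) (hD : IsOpen D) (ha : a ∈ D)
    (hp : AnalyticAt ℂ p a) (hp0 : ∀ᶠ z in 𝓝[≠] a, p z ≠ 0)
    (hbdd : (fun z => p z * f z) =O[𝓝[closure Ω \ {a}] a] (1 : ℂ → ℝ))
    (hacc : AccPt a (𝓟 (frontier Ω))) :
    IsSchwarzFunction Ω D (Function.update f a (conj' a)) where
  differentiableOn := by
    have hafr : a ∈ frontier Ω := isClosed_frontier.closure_subset hacc.clusterPt.mem_closure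
    have haΩ : a ∉ Ω := (hΩ.frontier_eq ▸ hafr).2
    have hne {z : ℂ} (hz : z ∈ Ω ∩ D) : z ≠ a := fun hza => haΩ (hza ▸ hz.1)
    exact (h.differentiableOn.mono fun z hz => ⟨hz.1, hz.2, hne hz⟩).congr fun z hz =>
      Function.update_of_ne (hne hz) _ _
  continuousOn := continuousOn_update_iff.2 ⟨inter_sdiff_assoc _ _ _ ▸ h.continuousOn, fun _ =>
    (h.tendsto_conj hD ha hp hp0 hbdd hacc).mono_left
      (nhdsWithin_mono _ (sdiff_subset_sdiff_left inter_subset_left))⟩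
  eq_conj z hz := by
    rcases eq_or_ne z a with rfl | hza
    · exact Function.update_self _ _ _
    · rw [Function.update_of_ne hza, h.eq_conj z ⟨hz.1, hz.2, hza⟩]

end IsSchwarzFunction

section Quotient

variable {Ω D : Set ℂ} {p S : ℂ → ℂ} {ζ₀ : ℂ} {r : ℝ}

theorem isSchwarzFunction_div (hSd : DifferentiableOn ℂ S (Ω ∩ D))
    (hSc : ContinuousOn S (closure Ω ∩ D)) (hS : ∀ z ∈ frontier Ω ∩ D, S z = conj' z * p z)
    (hp : DifferentiableOn ℂ p D) (hp0 : ∀ z ∈ D, p z ≠ 0) :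
    IsSchwarzFunction Ω D fun z => S z / p z where
  differentiableOn := hSd.fun_div (hp.mono inter_subset_right) fun z hz => hp0 z hz.2
  continuousOn := hSc.div (hp.continuousOn.mono inter_subset_right) fun z hz => hp0 z hz.2
  eq_conj z hz := by rw [hS z hz, mul_div_cancel_right₀ _ (hp0 z hz.2)]

theorem isSchwarzFunction_update_div (hΩ : IsOpen Ω) (hD : IsOpen D) (hζ₀ : ζ₀ ∈ D)
    (hacc : AccPt ζ₀ (𝓟 (frontier Ω))) (hSd : DifferentiableOn ℂ S (Ω ∩ D))
    (hSc : ContinuousOn S (closure Ω ∩ D)) (hS : ∀ z ∈ frontier Ω ∩ D, S z = conj' z * p z)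
    (hp : DifferentiableOn ℂ p D) (hp0 : ∀ z ∈ D \ {ζ₀}, p z ≠ 0) :
    IsSchwarzFunction Ω D (Function.update (fun z => S z / p z) ζ₀ (conj' ζ₀)) := by
  have hsub (s : Set ℂ) : s ∩ (D \ {ζ₀}) ⊆ s ∩ D := inter_subset_inter_right s sdiff_subset
  have hpunctured : D \ {ζ₀} ∈ 𝓝[≠] ζ₀ := sdiff_mem_nhdsWithin_compl (hD.mem_nhds hζ₀) _
  have hquot : IsSchwarzFunction Ω (D \ {ζ₀}) fun z => S z / p z :=
    isSchwarzFunction_div (hSd.mono (hsub Ω)) (hSc.mono (hsub _)) (fun z hz => hS z (hsub _ hz))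
      (hp.mono sdiff_subset) hp0
  refine hquot.update hΩ hD hζ₀ (hp.analyticAt (hD.mem_nhds hζ₀))
    (mem_of_superset hpunctured hp0) ?_ hacc
  have hζ₀Ω : ζ₀ ∈ closure Ω := frontier_subset_closure <|
    isClosed_frontier.closure_subset hacc.clusterPt.mem_closure
  have hSO : S =O[𝓝[closure Ω \ {ζ₀}] ζ₀] (1 : ℂ → ℝ) :=
    (((hSc ζ₀ ⟨hζ₀Ω, hζ₀⟩).mono_of_mem_nhdsWithin (inter_mem_nhdsWithin _
      (hD.mem_nhds hζ₀))).tendsto.isBigO_one ℝ).mono (nhdsWithin_mono _ sdiff_subset)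
  refine hSO.congr' ?_ .rfl
  filter_upwards [nhdsWithin_mono ζ₀ (fun z hz => hz.2) hpunctured] with z hz
  exact (mul_div_cancel₀ _ (hp0 z hz)).symm

theorem exists_radius_differentiableOn_and_ne_zero (hr : 0 < r) (hp : AnalyticAt ℂ p ζ₀)
    (hp0 : ∀ᶠ z in 𝓝[≠] ζ₀, p z ≠ 0) :
    ∃ r' > 0, r' ≤ r ∧ DifferentiableOn ℂ p (closedBall ζ₀ r') ∧
      ∀ z ∈ closedBall ζ₀ r' \ {ζ₀}, p z ≠ 0 := by
  obtain ⟨ρ, hρ, hball⟩ := Metric.nhds_basis_closedBall.mem_iff.1 <|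
    hp.eventually_analyticAt.and (eventually_nhdsWithin_iff.1 hp0)
  have hsub : closedBall ζ₀ (min ρ r) ⊆ closedBall ζ₀ ρ := closedBall_subset_closedBall inf_le_left
  exact ⟨min ρ r, lt_min hρ hr, inf_le_right,
    fun z hz => (hball (hsub hz)).1.differentiableAt.differentiableWithinAt,
    fun z hz => (hball (hsub hz.1)).2 hz.2⟩

theorem eventually_nhdsNE_eval_ne_zero {q : Polynomial ℂ} (hq : q ≠ 0) (a : ℂ) :
    ∀ᶠ z in 𝓝[≠] a, q.eval z ≠ 0 :=
  nhdsNE_le_cofinite a (Polynomial.finite_setOfPred_isRoot hq).compl_mem_cofinite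

theorem union_frontier_inter_ball_inter_ball {r' : ℝ} (hr : r' ≤ r) :
    (Ω ∪ (frontier Ω ∩ ball ζ₀ r)) ∩ ball ζ₀ r' = closure Ω ∩ ball ζ₀ r' := by
  rw [closure_eq_self_union_frontier, union_inter_distrib_right, union_inter_distrib_right,
    inter_assoc, inter_eq_right.2 (ball_subset_ball hr)]

theorem stmt_2_general (hr : 0 < r) (hp : AnalyticAt ℂ p ζ₀) (hp0 : ∀ᶠ z in 𝓝[≠] ζ₀, p z ≠ 0)
    (hΩ : IsOpen Ω) (hacc : AccPt ζ₀ (𝓟 (frontier Ω))) (hShol : DifferentiableOn ℂ S Ω)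
    (hScont : ContinuousOn S (Ω ∪ (frontier Ω ∩ ball ζ₀ r)))
    (hSbdry : ∀ ζ ∈ frontier Ω ∩ ball ζ₀ r, S ζ = conj' ζ * p ζ) :
    ∃ r' > 0, r' ≤ r ∧ (∀ z ∈ closedBall ζ₀ r' \ {ζ₀}, p z ≠ 0) ∧
      DifferentiableOn ℂ (fun z => if z = ζ₀ then conj' ζ₀ else S z / p z) (Ω ∩ ball ζ₀ r') ∧
      ContinuousOn (fun z => if z = ζ₀ then conj' ζ₀ else S z / p z)
        ((Ω ∪ (frontier Ω ∩ ball ζ₀ r)) ∩ ball ζ₀ r') ∧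
      ∀ ζ ∈ (frontier Ω ∩ ball ζ₀ r) ∩ ball ζ₀ r',
        (if ζ = ζ₀ then conj' ζ₀ else S ζ / p ζ) = conj' ζ := by
  obtain ⟨r', hr', hr'r, hpd, hpne⟩ := exists_radius_differentiableOn_and_ne_zero hr hp hp0
  have hΓ := union_frontier_inter_ball_inter_ball (Ω := Ω) (ζ₀ := ζ₀) hr'r
  have h := isSchwarzFunction_update_div hΩ isOpen_ball (mem_ball_self hr') hacc
    (hShol.mono inter_subset_left) (hΓ ▸ hScont.mono inter_subset_left)
    (fun z hz => hSbdry z ⟨hz.1, ball_subset_ball hr'r hz.2⟩)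
    (hpd.mono ball_subset_closedBall) fun z hz => hpne z ⟨ball_subset_closedBall hz.1, hz.2⟩
  have hupdate : Function.update (fun z => S z / p z) ζ₀ (conj' ζ₀) =
      fun z => if z = ζ₀ then conj' ζ₀ else S z / p z :=
    funext fun z => Function.update_apply _ _ _ _
  rw [hupdate] at h
  exact ⟨r', hr', hr'r, hpne, h.differentiableOn, hΓ ▸ h.continuousOn,
    fun ζ hζ => h.eq_conj ζ ⟨hζ.1.1, hζ.2⟩⟩

end Quotient

/-- If `S(ζ) = conj ζ · p(ζ)` on `Γ` for a polynomial `p`, then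
`f = S/p` (with `f(ζ₀) = conj ζ₀`) is a Schwarz function near `ζ₀`. -/
theorem stmt_2 (ζ₀ : ℂ) (hζ₀ne : ζ₀ ≠ 0) (r : ℝ) (hr : 0 < r) (p : Polynomial ℂ)
    (hp : p ≠ 0)
    (Ω : Set ℂ) (hΩopen : IsOpen Ω) (hΩsub : Ω ⊆ ball ζ₀ r)
    (hΩbdd : Bornology.IsBounded Ω)
    (hζ₀mem : ζ₀ ∈ frontier Ω)
    (hacc : ζ₀ ∈ closure ((frontier Ω ∩ ball ζ₀ r) \ {ζ₀}))
    (S : ℂ → ℂ)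
    (hShol : DifferentiableOn ℂ S Ω)
    (hScont : ContinuousOn S (Ω ∪ (frontier Ω ∩ ball ζ₀ r)))
    (hSbdd : ∃ M : ℝ, ∀ z ∈ Ω ∪ (frontier Ω ∩ ball ζ₀ r), ‖S z‖ ≤ M)
    (hSbdry : ∀ ζ ∈ frontier Ω ∩ ball ζ₀ r, S ζ = conj' ζ * p.eval ζ) :
    ∃ r' > 0, r' ≤ r ∧ (∀ z ∈ closedBall ζ₀ r' \ {ζ₀}, p.eval z ≠ 0) ∧
      DifferentiableOn ℂ (fun z => if z = ζ₀ then conj' ζ₀ else S z / p.eval z)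
        (Ω ∩ ball ζ₀ r') ∧
      ContinuousOn (fun z => if z = ζ₀ then conj' ζ₀ else S z / p.eval z)
        ((Ω ∪ (frontier Ω ∩ ball ζ₀ r)) ∩ ball ζ₀ r') ∧
      ∀ ζ ∈ (frontier Ω ∩ ball ζ₀ r) ∩ ball ζ₀ r',
        (if ζ = ζ₀ then conj' ζ₀ else S ζ / p.eval ζ) = conj' ζ := by
  have hacc' : AccPt ζ₀ (𝓟 (frontier Ω)) := accPt_principal_iff_clusterPt.2 <|
    mem_closure_iff_clusterPt.1 (closure_mono (sdiff_subset_sdiff_left inter_subset_left) hacc)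
  exact stmt_2_general hr (p.differentiable.analyticAt ζ₀) (eventually_nhdsNE_eval_ne_zero hp ζ₀)
    hΩopen hacc' hShol hScont hSbdry
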